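/- Suppose n is odd, and let i, j, p, q be nonnegative integers with 2i+j ≤ n and 2p+q ≤ 2n. Then the reversed product O(2n−2p−q, p, q)·O(n−2i−j, i, j) in A satisfies: it equals O(n−2i−j, i, j)·O(2n−2p−q−1, p+1, q−1) if q is odd; it equals O(n−2i−j, i, j)·O(2n−q, 0, q) if q is even and p = 0; and it equals O(n−2i−j, i, j)·O(2n−2p−q+1, p−1, q+1) if q is even and p ≥ 1. -/

import Mathlib

/-!
Setting: `lam n = exp(2πi/n)` is a primitive `n`-th root of unity in `ℂ`.
`DUAlg` is the graded down-up algebra `A(0,1) = ℂ⟨u,d⟩/(d²u - ud², du² - u²d)`,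
with generators `uGen`, `dGen`.  The automorphism `g` (of order `2n`) is
determined by `g u = d`, `g d = lam n • u`, and generates the cyclic group `G`,
so that the fixed subring `A^G` is `{a | g a = a}`.  The orbit sum is
`orbitSum n a b c = u^a (du)^b d^c + (lam n)^(b+c) • (d^a (ud)^b u^c)`.
-/

noncomputable section

/-- `lam n = exp(2πi/n)`, a primitive `n`-th root of unity. -/
def lam (n : ℕ) : ℂ := Complex.exp (2 * (Real.pi : ℂ) * Complex.I / (n : ℂ))

/-- The defining relations of the down-up algebra `A(0,1)`:
`d²u = ud²` and `du² = u²d` (here `0` plays the role of `u`, `1` of `d`). -/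
inductive DownUpRel : FreeAlgebra ℂ (Fin 2) → FreeAlgebra ℂ (Fin 2) → Prop
  | rel1 : DownUpRel (FreeAlgebra.ι ℂ 1 * FreeAlgebra.ι ℂ 1 * FreeAlgebra.ι ℂ 0)
      (FreeAlgebra.ι ℂ 0 * FreeAlgebra.ι ℂ 1 * FreeAlgebra.ι ℂ 1)
  | rel2 : DownUpRel (FreeAlgebra.ι ℂ 1 * FreeAlgebra.ι ℂ 0 * FreeAlgebra.ι ℂ 0)
      (FreeAlgebra.ι ℂ 0 * FreeAlgebra.ι ℂ 0 * FreeAlgebra.ι ℂ 1)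

/-- The graded down-up algebra `A(0,1)`. -/
abbrev DUAlg : Type := RingQuot DownUpRel

/-- The generator `u` of `A(0,1)`. -/
def uGen : DUAlg := RingQuot.mkAlgHom ℂ DownUpRel (FreeAlgebra.ι ℂ 0)

/-- The generator `d` of `A(0,1)`. -/
def dGen : DUAlg := RingQuot.mkAlgHom ℂ DownUpRel (FreeAlgebra.ι ℂ 1)

/-- Orbit sum `O(a,b,c) = u^a (du)^b d^c + λ^(b+c) d^a (ud)^b u^c`. -/
def orbitSum (n a b c : ℕ) : DUAlg :=
  uGen ^ a * (dGen * uGen) ^ b * dGen ^ c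
    + (lam n ^ (b + c)) • (dGen ^ a * (uGen * dGen) ^ b * uGen ^ c)

theorem du_rel1 : dGen * dGen * uGen = uGen * dGen * dGen := by
  have h := RingQuot.mkAlgHom_rel ℂ DownUpRel.rel1
  simpa [uGen, dGen] using h

theorem du_rel2 : dGen * uGen * uGen = uGen * uGen * dGen := by
  have h := RingQuot.mkAlgHom_rel ℂ DownUpRel.rel2
  simpa [uGen, dGen] using h

/-- `u` and `d` both intertwine `E` and `F`, in both directions. -/
structure Tw (E F : DUAlg) : Prop where
  u1 : SemiconjBy uGen E F
  u2 : SemiconjBy uGen F E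
  d1 : SemiconjBy dGen E F
  d2 : SemiconjBy dGen F E

namespace Tw

theorem symm' {E F : DUAlg} (h : Tw E F) : Tw F E := ⟨h.u2, h.u1, h.d2, h.d1⟩

theorem mul {E F E' F' : DUAlg} (h : Tw E F) (h' : Tw E' F') : Tw (E * E') (F * F') :=
  ⟨h.u1.mul_right h'.u1, h.u2.mul_right h'.u2, h.d1.mul_right h'.d1, h.d2.mul_right h'.d2⟩

theorem pow {E F : DUAlg} (h : Tw E F) (k : ℕ) : Tw (E ^ k) (F ^ k) :=
  ⟨h.u1.pow_right k, h.u2.pow_right k, h.d1.pow_right k, h.d2.pow_right k⟩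

theorem add {E F E' F' : DUAlg} (h : Tw E F) (h' : Tw E' F') : Tw (E + E') (F + F') :=
  ⟨h.u1.add_right h'.u1, h.u2.add_right h'.u2, h.d1.add_right h'.d1, h.d2.add_right h'.d2⟩

theorem smul {E F : DUAlg} (l : ℂ) (h : Tw E F) : Tw (l • E) (l • F) := by
  obtain ⟨h1, h2, h3, h4⟩ := h
  simp only [SemiconjBy] at h1 h2 h3 h4
  constructor <;> simp [SemiconjBy, h1, h2, h3, h4]

theorem xy : Tw (dGen * uGen) (uGen * dGen) := by
  have h1 := du_rel1
  have h2 := du_rel2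
  constructor <;> simp only [SemiconjBy, ← mul_assoc, h1, h2]

theorem uu : Tw (uGen ^ 2) (uGen ^ 2) := by
  have h2 := du_rel2
  constructor <;> simp only [SemiconjBy, pow_two, ← mul_assoc, h2]

theorem dd : Tw (dGen ^ 2) (dGen ^ 2) := by
  have h1 := du_rel1
  constructor <;> simp only [SemiconjBy, pow_two, ← mul_assoc, h1]

theorem ueven {a : ℕ} (ha : Even a) : Tw (uGen ^ a) (uGen ^ a) := by
  obtain ⟨k, rfl⟩ := ha
  rw [← two_mul, pow_mul]
  exact uu.pow k

theorem deven {a : ℕ} (ha : Even a) : Tw (dGen ^ a) (dGen ^ a) := by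
  obtain ⟨k, rfl⟩ := ha
  rw [← two_mul, pow_mul]
  exact dd.pow k

end Tw

theorem semi_even {w E F : DUAlg} (h1 : SemiconjBy w E F) (h2 : SemiconjBy w F E) {k : ℕ}
    (hk : Even k) : SemiconjBy (w ^ k) E E := by
  obtain ⟨m, rfl⟩ := hk
  rw [← two_mul, pow_mul]
  have : Commute (w ^ 2) E := by
    rw [pow_two]; exact h2.mul_left h1
  exact this.pow_left m

theorem semi_odd {w E F : DUAlg} (h1 : SemiconjBy w E F) (h2 : SemiconjBy w F E) {k : ℕ}
    (hk : Odd k) : SemiconjBy (w ^ k) E F := by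
  obtain ⟨m, rfl⟩ := hk
  rw [pow_succ]
  exact (semi_even h2 h1 (even_two_mul m)).mul_left h1

theorem word_semi {u d z E F : DUAlg} (u1 : SemiconjBy u E F) (u2 : SemiconjBy u F E)
    (d1 : SemiconjBy d E F) (d2 : SemiconjBy d F E) (z1 : Commute z E) (z2 : Commute z F)
    {a b c : ℕ} (h : Odd (a + c)) : SemiconjBy (u ^ a * z ^ b * d ^ c) E F := by
  rcases Nat.even_or_odd c with hc | hc
  · have ha : Odd a := by
      rcases Nat.even_or_odd a with ha | ha
      · exact absurd (ha.add hc) (Nat.not_even_iff_odd.2 h)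
      · exact ha
    exact ((semi_odd u1 u2 ha).mul_left (z1.pow_left b)).mul_left (semi_even d1 d2 hc)
  · have ha : Even a := by
      rcases Nat.even_or_odd a with ha | ha
      · exact ha
      · exact absurd (ha.add_odd hc) (Nat.not_even_iff_odd.2 h)
    exact ((semi_even u2 u1 ha).mul_left (z2.pow_left b)).mul_left (semi_odd d1 d2 hc)

theorem orbit_semi {E F : DUAlg} (h : Tw E F) {n a b c : ℕ} (hac : Odd (a + c)) :
    E * orbitSum n a b c = orbitSum n a b c * F := by
  have w1 : SemiconjBy (uGen ^ a * (dGen * uGen) ^ b * dGen ^ c) F E :=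
    word_semi h.u2 h.u1 h.d2 h.d1 (h.d1.mul_left h.u2) (h.d2.mul_left h.u1) hac
  have w2 : SemiconjBy (dGen ^ a * (uGen * dGen) ^ b * uGen ^ c) F E :=
    word_semi h.d2 h.d1 h.u2 h.u1 (h.u1.mul_left h.d2) (h.u2.mul_left h.d1) hac
  simp only [SemiconjBy] at w1 w2
  simp only [orbitSum, mul_add, add_mul, mul_smul_comm, smul_mul_assoc, w1, w2]

theorem shift_u (a p q : ℕ) : uGen ^ (a + 1) * (dGen * uGen) ^ p * dGen ^ (q + 1)
    = uGen ^ a * (uGen * dGen) ^ (p + 1) * dGen ^ q := by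
  have h : uGen * (dGen * uGen) ^ p = (uGen * dGen) ^ p * uGen := (Tw.xy.pow p).u1
  calc _ = uGen ^ a * (uGen * (dGen * uGen) ^ p) * (dGen * dGen ^ q) := by
        rw [pow_succ, pow_succ' dGen]; simp only [mul_assoc]
    _ = _ := by rw [h, pow_succ (uGen * dGen)]; simp only [mul_assoc]

theorem shift_d (a p q : ℕ) : dGen ^ (a + 1) * (uGen * dGen) ^ p * uGen ^ (q + 1)
    = dGen ^ a * (dGen * uGen) ^ (p + 1) * uGen ^ q := by
  have h : dGen * (uGen * dGen) ^ p = (dGen * uGen) ^ p * dGen := (Tw.xy.pow p).d2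
  calc _ = dGen ^ a * (dGen * (uGen * dGen) ^ p) * (uGen * uGen ^ q) := by
        rw [pow_succ, pow_succ' uGen]; simp only [mul_assoc]
    _ = _ := by rw [h, pow_succ (dGen * uGen)]; simp only [mul_assoc]

theorem tw_zero (n : ℕ) {a q : ℕ} (ha : Even a) (hq : Even q) :
    Tw (orbitSum n a 0 q) (orbitSum n a 0 q) := by
  have h := ((Tw.ueven ha).mul (Tw.xy.pow 0)).mul (Tw.deven hq)
  have h' := ((Tw.deven ha).mul (Tw.xy.symm'.pow 0)).mul (Tw.ueven hq)
  have := h.add (h'.smul (lam n ^ (0 + q)))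
  simpa [orbitSum] using this

theorem tw_shift (n : ℕ) {a q : ℕ} (p : ℕ) (ha : Even a) (hq : Even q) :
    Tw (orbitSum n a (p + 1) q) (orbitSum n (a + 1) p (q + 1)) := by
  have h := ((Tw.ueven ha).mul (Tw.xy.pow (p + 1))).mul (Tw.deven hq)
  have h' := ((Tw.deven ha).mul (Tw.xy.symm'.pow (p + 1))).mul (Tw.ueven hq)
  have := h.add (h'.smul (lam n ^ (p + 1 + q)))
  rw [← shift_u, ← shift_d] at this
  unfold orbitSum
  rwa [show p + (q + 1) = p + 1 + q by omega]

/-- For `n` odd, the product of a degree-`2n` orbit sum with a degree-`n` orbit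
sum in the down-up algebra `A(0,1)` reduces to a product in the other order
(Proposition 3.4 of the paper). -/
theorem orbitSum_deg_two_n_mul_deg_n (n : ℕ) (hodd : Odd n)
    (i j p q : ℕ) (hij : 2 * i + j ≤ n) (hpq : 2 * p + q ≤ 2 * n) :
    (Odd q →
      orbitSum n (2 * n - 2 * p - q) p q * orbitSum n (n - 2 * i - j) i j =
        orbitSum n (n - 2 * i - j) i j * orbitSum n (2 * n - 2 * p - q - 1) (p + 1) (q - 1)) ∧
    (Even q → p = 0 →
      orbitSum n (2 * n - 2 * p - q) p q * orbitSum n (n - 2 * i - j) i j =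
        orbitSum n (n - 2 * i - j) i j * orbitSum n (2 * n - q) 0 q) ∧
    (Even q → 1 ≤ p →
      orbitSum n (2 * n - 2 * p - q) p q * orbitSum n (n - 2 * i - j) i j =
        orbitSum n (n - 2 * i - j) i j * orbitSum n (2 * n - 2 * p - q + 1) (p - 1) (q + 1)) := by
  have hac : Odd (n - 2 * i - j + j) := by
    rw [show n - 2 * i - j + j = n - 2 * i by omega]
    rw [Nat.odd_iff] at *; omega
  refine ⟨fun hq => ?_, fun hq hp => ?_, fun hq hp => ?_⟩
  · refine orbit_semi ?_ hac
    obtain ⟨k, rfl⟩ := hq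
    have := tw_shift n (a := 2 * n - 2 * p - (2 * k + 1) - 1) (q := 2 * k) p
      (by rw [Nat.even_iff]; omega) (even_two_mul k)
    rw [show 2 * n - 2 * p - (2 * k + 1) - 1 + 1 = 2 * n - 2 * p - (2 * k + 1) by omega] at this
    exact this.symm'
  · subst hp
    refine orbit_semi ?_ hac
    exact tw_zero n (by rw [Nat.even_iff] at *; omega) hq
  · refine orbit_semi ?_ hac
    obtain ⟨r, rfl⟩ : ∃ r, p = r + 1 := ⟨p - 1, by omega⟩
    exact tw_shift n r (by rw [Nat.even_iff] at *; omega) hq
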